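/- For all real x, y with 0 ≤ x, y < 1 and x + y < 1, one has H(x/(1−y))·(1−y) − H(x) ≤ −x·y·log₂e. -/

import Mathlib

/-!
Write `η t = -t log t` and put `a = 1 - x`, `b = 1 - y`, `c = 1 - x - y`. In nats, the grouping
rule for entropy turns the left side into `η c - η a - η b`. Since `a b = c + x y`, Gibbs'
inequality bounds `η c` by `x y - c log a - c log b`. On the other hand `a = c + y` and
`b = c + x`, so `η a + η b = -c log a - c log b - y log a - x log b`, where the last two terms
are each at least `x y` because `-log (1 - t) ≥ t`.
-/

/-- The binary entropy function `H(x) = -x·log₂ x - (1-x)·log₂(1-x)`,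
extended by `H(0) = H(1) = 0` (automatic since `logb 2 0 = 0`). -/
noncomputable def binEntropy (x : ℝ) : ℝ :=
  -x * Real.logb 2 x - (1 - x) * Real.logb 2 (1 - x)

theorem binEntropy_eq_real_binEntropy_div_log_two (p : ℝ) :
    binEntropy p = Real.binEntropy p / Real.log 2 := by
  simp only [binEntropy, Real.binEntropy, Real.logb, Real.log_inv]
  ring

theorem negMulLog_le_sub_sub_mul_log {p q : ℝ} (hp : 0 ≤ p) (hq : 0 < q) :
    Real.negMulLog p ≤ q - p - p * Real.log q := by
  have hpq : q * (p / q) = p := mul_div_cancel₀ p hq.ne'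
  calc Real.negMulLog p
      = p / q * Real.negMulLog q + q * Real.negMulLog (p / q) := by
        rw [← Real.negMulLog_mul, hpq]
    _ ≤ p / q * Real.negMulLog q + q * (1 - p / q) := by
        gcongr
        exact Real.negMulLog_le_one_sub_self (div_nonneg hp hq.le)
    _ = q - p - p * Real.log q := by
        rw [Real.negMulLog]
        linear_combination (-Real.log q - 1) * hpq

theorem negMulLog_one_sub_sub_add_mul_le {x y : ℝ} (hx0 : 0 ≤ x) (hx1 : x < 1)
    (hy0 : 0 ≤ y) (hy1 : y < 1) (hxy : x + y ≤ 1) :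
    Real.negMulLog (1 - x - y) + x * y ≤ Real.negMulLog (1 - x) + Real.negMulLog (1 - y) := by
  have ha : 0 < 1 - x := sub_pos.2 hx1
  have hb : 0 < 1 - y := sub_pos.2 hy1
  have gibbs : Real.negMulLog (1 - x - y) ≤ (1 - x) * (1 - y) - (1 - x - y) -
      (1 - x - y) * (Real.log (1 - x) + Real.log (1 - y)) := by
    rw [← Real.log_mul ha.ne' hb.ne']
    exact negMulLog_le_sub_sub_mul_log (by linarith) (mul_pos ha hb)
  have log_a : y * Real.log (1 - x) ≤ y * (1 - x - 1) :=
    mul_le_mul_of_nonneg_left (Real.log_le_sub_one_of_pos ha) hy0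
  have log_b : x * Real.log (1 - y) ≤ x * (1 - y - 1) :=
    mul_le_mul_of_nonneg_left (Real.log_le_sub_one_of_pos hb) hx0
  rw [Real.negMulLog.eq_def (1 - x), Real.negMulLog.eq_def (1 - y)]
  linarith

theorem real_binEntropy_div_mul (p : ℝ) {s : ℝ} (hs : s ≠ 0) :
    Real.binEntropy (p / s) * s =
      Real.negMulLog p + Real.negMulLog (s - p) - Real.negMulLog s := by
  have hp : s * (p / s) = p := mul_div_cancel₀ p hs
  have hsp : s * (1 - p / s) = s - p := by rw [mul_sub, mul_one, hp]
  have scale_p := Real.negMulLog_mul s (p / s)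
  have scale_sp := Real.negMulLog_mul s (1 - p / s)
  rw [hp] at scale_p
  rw [hsp] at scale_sp
  rw [Real.binEntropy_eq_negMulLog_add_negMulLog_one_sub, scale_p, scale_sp]
  ring

theorem real_binEntropy_div_one_sub_mul_sub_le {x y : ℝ} (hx0 : 0 ≤ x) (hx1 : x < 1)
    (hy0 : 0 ≤ y) (hy1 : y < 1) (hxy : x + y ≤ 1) :
    Real.binEntropy (x / (1 - y)) * (1 - y) - Real.binEntropy x ≤ -(x * y) := by
  have key := negMulLog_one_sub_sub_add_mul_le hx0 hx1 hy0 hy1 hxy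
  rw [real_binEntropy_div_mul x (sub_pos.2 hy1).ne', sub_right_comm 1 y x,
    Real.binEntropy_eq_negMulLog_add_negMulLog_one_sub]
  linarith

theorem stmt3 (x y : ℝ) (hx0 : 0 ≤ x) (hx1 : x < 1) (hy0 : 0 ≤ y) (hy1 : y < 1)
    (hxy : x + y < 1) :
    binEntropy (x / (1 - y)) * (1 - y) - binEntropy x ≤
      -(x * y * Real.logb 2 (Real.exp 1)) := by
  calc binEntropy (x / (1 - y)) * (1 - y) - binEntropy x
      = (Real.binEntropy (x / (1 - y)) * (1 - y) - Real.binEntropy x) / Real.log 2 := by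
        simp only [binEntropy_eq_real_binEntropy_div_log_two]
        ring
    _ ≤ -(x * y) / Real.log 2 :=
        div_le_div_of_nonneg_right
          (real_binEntropy_div_one_sub_mul_sub_le hx0 hx1 hy0 hy1 hxy.le)
          (Real.log_nonneg one_le_two)
    _ = -(x * y * Real.logb 2 (Real.exp 1)) := by
        rw [Real.logb, Real.log_exp]
        ring
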